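/- Let n ≥ 1, let X be a finite index set, and let {Π_x}_{x∈X} be a POVM on ℂ^{2ⁿ}: each Π_x is a positive semidefinite Hermitian 2ⁿ × 2ⁿ matrix, ∑_{x∈X} Π_x = I, and Tr[Π_x] > 0 for each x. Define F_{aa} := 2^{−n} ∑_{x∈X} (Tr[Π_x P_a])² / Tr[Π_x] for a ∈ {1, …, 4ⁿ − 1}. Then there exists an index a ∈ {1, …, 4ⁿ − 1} such that F_{aa} ≤ (2ⁿ − 1)/(4ⁿ − 1). -/

import Mathlib

open Matrix Kronecker BigOperators ComplexOrder

/-- The single-qubit Pauli X matrix. -/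
def sigmaX : Matrix (Fin 2) (Fin 2) ℂ := !![0, 1; 1, 0]

/-- The single-qubit Pauli Z matrix. -/
def sigmaZ : Matrix (Fin 2) (Fin 2) ℂ := !![1, 0; 0, -1]

/-- The single-qubit Pauli operator `i^{a_x a_z} X^{a_x} Z^{a_z}`. -/
noncomputable def pauli1 (ax az : Bool) : Matrix (Fin 2) (Fin 2) ℂ :=
  (Complex.I ^ ((if ax then 1 else 0) * (if az then 1 else 0) : ℕ)) •
    (sigmaX ^ (if ax then (1 : ℕ) else 0) * sigmaZ ^ (if az then (1 : ℕ) else 0))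

/-- Index of an `n`-qubit Pauli operator: the pair `(a_x, a_z)` of bit strings
(the binary representation of `a ∈ {0, …, 4ⁿ − 1}`). -/
abbrev PauliIdx (n : ℕ) := (Fin n → Bool) × (Fin n → Bool)

/-- The index of the identity Pauli operator `P_0 = I`. -/
def pauliZero (n : ℕ) : PauliIdx n := (fun _ => false, fun _ => false)

/-- The `n`-qubit Pauli operator `P_a = ⨂_{k=1}^n i^{a_{x,k} a_{z,k}} X^{a_{x,k}} Z^{a_{z,k}}`,
the `n`-fold Kronecker product realized on the index set `Fin n → Fin 2`. -/
noncomputable def pauliOp {n : ℕ} (a : PauliIdx n) :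
    Matrix (Fin n → Fin 2) (Fin n → Fin 2) ℂ :=
  Matrix.of fun j k => ∏ l, pauli1 (a.1 l) (a.2 l) (j l) (k l)

/-- The symplectic inner product `⟨[a]₂, [b]₂⟩ = ∑_k (a_{x,k} b_{z,k} + a_{z,k} b_{x,k})`
of the binary representations of two Pauli indices. -/
def sympl {n : ℕ} (a b : PauliIdx n) : ℕ :=
  ∑ k, ((if a.1 k then 1 else 0) * (if b.2 k then 1 else 0)
      + (if a.2 k then 1 else 0) * (if b.1 k then 1 else 0))

lemma pauli1_sum (j k l m : Fin 2) :
    ∑ b : Bool × Bool, pauli1 b.1 b.2 j k * star (pauli1 b.1 b.2 l m)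
      = if j = l ∧ k = m then 2 else 0 := by
  rw [Fintype.sum_prod_type]
  fin_cases j <;> fin_cases k <;> fin_cases l <;> fin_cases m <;>
    simp [pauli1, sigmaX, sigmaZ, Matrix.mul_apply, Fin.sum_univ_two] <;> norm_num

lemma pauliOp_sum {n : ℕ} (j k l m : Fin n → Fin 2) :
    ∑ a : PauliIdx n, pauliOp a j k * star (pauliOp a l m)
      = if j = l ∧ k = m then 2 ^ n else 0 := by
  have h1 : ∑ a : PauliIdx n, pauliOp a j k * star (pauliOp a l m)
      = ∑ f : Fin n → Bool × Bool, ∏ t, (pauli1 (f t).1 (f t).2 (j t) (k t)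
          * star (pauli1 (f t).1 (f t).2 (l t) (m t))) := by
    symm
    apply Fintype.sum_equiv (Equiv.arrowProdEquivProdArrow (Fin n) (fun _ => Bool) (fun _ => Bool))
    intro f
    simp [pauliOp, Finset.prod_mul_distrib, Equiv.arrowProdEquivProdArrow]
  rw [h1]
  have h2 := Finset.prod_univ_sum (fun _ : Fin n => (Finset.univ : Finset (Bool × Bool)))
    (fun t b => pauli1 b.1 b.2 (j t) (k t) * star (pauli1 b.1 b.2 (l t) (m t)))
  rw [Fintype.piFinset_univ] at h2
  rw [← h2]
  simp_rw [pauli1_sum]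
  split_ifs with h
  · obtain ⟨rfl, rfl⟩ := h
    simp
  · have : ∃ t, ¬ (j t = l t ∧ k t = m t) := by
      by_contra hc
      push Not at hc
      exact h ⟨funext fun t => (hc t).1, funext fun t => (hc t).2⟩
    obtain ⟨t, ht⟩ := this
    exact Finset.prod_eq_zero (Finset.mem_univ t) (by simp [ht])

lemma parseval {n : ℕ} (A : Matrix (Fin n → Fin 2) (Fin n → Fin 2) ℂ) :
    ∑ a : PauliIdx n, Complex.normSq ((A * pauliOp a).trace)
      = 2 ^ n * ∑ j, ∑ k, Complex.normSq (A j k) := by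
  have h : ∀ a : PauliIdx n, ((Complex.normSq ((A * pauliOp a).trace) : ℝ) : ℂ)
      = ∑ p : (Fin n → Fin 2) × (Fin n → Fin 2), ∑ q : (Fin n → Fin 2) × (Fin n → Fin 2),
        A p.1 p.2 * star (A q.1 q.2) * (pauliOp a p.2 p.1 * star (pauliOp a q.2 q.1)) := by
    intro a
    have ht : (A * pauliOp a).trace
        = ∑ p : (Fin n → Fin 2) × (Fin n → Fin 2), A p.1 p.2 * pauliOp a p.2 p.1 := by
      simp [Matrix.trace, Matrix.mul_apply, Fintype.sum_prod_type]
    rw [← Complex.mul_conj, ht, map_sum, Finset.sum_mul_sum]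
    refine Finset.sum_congr rfl fun p _ => Finset.sum_congr rfl fun q _ => ?_
    simp only [map_mul, Complex.star_def]
    ring
  apply Complex.ofReal_injective
  rw [Complex.ofReal_sum]
  simp_rw [h]
  rw [Finset.sum_comm]
  simp_rw [Finset.sum_comm (s := (Finset.univ : Finset (PauliIdx n)))]
  simp_rw [← Finset.mul_sum, pauliOp_sum]
  push_cast
  rw [← Fintype.sum_prod_type' (f := fun j k => ((Complex.normSq (A j k) : ℝ) : ℂ)), Finset.mul_sum]
  refine Finset.sum_congr rfl fun p _ => ?_
  rw [Finset.sum_eq_single p]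
  · simp [← Complex.mul_conj]; ring
  · intro q _ hq
    rw [if_neg, mul_zero]
    rintro ⟨h1, h2⟩
    exact hq (Prod.ext h2.symm h1.symm)
  · simp

lemma psd_entry {m : Type*} [Fintype m] [DecidableEq m] {A : Matrix m m ℂ} (hA : A.PosSemidef)
    (i j : m) : Complex.normSq (A i j) ≤ (A i i).re * (A j j).re := by
  have h := (hA.submatrix ![i, j]).det_nonneg
  have hij : A j i = star (A i j) := (hA.isHermitian.apply j i).symm
  have hii : (A i i).im = 0 := (Complex.nonneg_iff.mp (hA.diag_nonneg (i := i))).2.symm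
  rw [Matrix.det_fin_two] at h
  have h' := (Complex.nonneg_iff.mp h).1
  simp [hij, hii] at h'
  rw [Complex.normSq_apply]
  linarith

lemma psd_sum {m : Type*} [Fintype m] [DecidableEq m] {A : Matrix m m ℂ} (hA : A.PosSemidef) :
    ∑ i, ∑ j, Complex.normSq (A i j) ≤ (A.trace).re ^ 2 := by
  have : (A.trace).re = ∑ i, (A i i).re := by simp [Matrix.trace]
  rw [this, sq, Finset.sum_mul_sum]
  exact Finset.sum_le_sum fun i _ => Finset.sum_le_sum fun j _ => psd_entry hA i j

lemma pauliOp_zero (n : ℕ) : pauliOp (pauliZero n) = 1 := by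
  ext j k
  have : pauli1 false false = 1 := by simp [pauli1]
  simp only [pauliOp, pauliZero, Matrix.of_apply, this, Matrix.one_apply]
  rw [Finset.prod_ite_zero]
  simp [funext_iff]

/-- **Existence of a poorly informative Pauli direction for single-copy POVMs.** For any POVM
`{Π_x}` on `ℂ^{2ⁿ}`, there exists a nonzero Pauli index `a` whose diagonal Fisher
information entry `F_{aa} = 2^{−n} ∑_x (Tr[Π_x P_a])² / Tr[Π_x]` at the maximally mixed state
satisfies `F_{aa} ≤ (2ⁿ − 1)/(4ⁿ − 1)`. -/
theorem povm_fisher_diag_exists_small (n : ℕ) (hn : 1 ≤ n)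
    {ι : Type*} [Fintype ι]
    (K : ι → Matrix (Fin n → Fin 2) (Fin n → Fin 2) ℂ)
    (hpsd : ∀ x, (K x).PosSemidef)
    (hsum : ∑ x, K x = 1)
    (htr : ∀ x, 0 < ((K x).trace).re) :
    ∃ a ∈ Finset.univ.erase (pauliZero n),
      ((2 : ℝ) ^ n)⁻¹ * (∑ x, ((K x * pauliOp a).trace).re ^ 2 / ((K x).trace).re)
        ≤ ((2 : ℝ) ^ n - 1) / ((4 : ℝ) ^ n - 1) := by
  classical
  have hone : ∀ x, ∑ a ∈ Finset.univ.erase (pauliZero n),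
      ((K x * pauliOp a).trace).re ^ 2 / ((K x).trace).re ≤ (2 ^ n - 1) * ((K x).trace).re := by
    intro x
    rw [← Finset.sum_div, div_le_iff₀ (htr x)]
    have h1 := Finset.add_sum_erase Finset.univ
      (fun a : PauliIdx n => ((K x * pauliOp a).trace).re ^ 2) (Finset.mem_univ (pauliZero n))
    have h2 : ∑ a : PauliIdx n, ((K x * pauliOp a).trace).re ^ 2
        ≤ 2 ^ n * ((K x).trace).re ^ 2 := by
      calc _ ≤ ∑ a : PauliIdx n, Complex.normSq ((K x * pauliOp a).trace) := by
            refine Finset.sum_le_sum fun a _ => ?_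
            rw [Complex.normSq_apply]
            nlinarith [mul_self_nonneg ((K x * pauliOp a).trace).im]
        _ = _ := parseval (K x)
        _ ≤ _ := mul_le_mul_of_nonneg_left (psd_sum (hpsd x)) (by positivity)
    simp only [pauliOp_zero, mul_one] at h1
    nlinarith
  have htot : ∑ x, ((K x).trace).re = 2 ^ n := by
    rw [← Complex.re_sum, ← Matrix.trace_sum, hsum, Matrix.trace_one]
    simp
    exact_mod_cast Complex.ofReal_re ((2 : ℝ) ^ n)
  have hsumF : ∑ a ∈ Finset.univ.erase (pauliZero n),
      ((2 : ℝ) ^ n)⁻¹ * (∑ x, ((K x * pauliOp a).trace).re ^ 2 / ((K x).trace).re)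
        ≤ 2 ^ n - 1 := by
    rw [← Finset.mul_sum, Finset.sum_comm, inv_mul_le_iff₀ (by positivity)]
    calc _ ≤ ∑ x, (2 ^ n - 1) * ((K x).trace).re := Finset.sum_le_sum fun x _ => hone x
      _ = _ := by rw [← Finset.mul_sum, htot, mul_comm]
  have hcard : ((Finset.univ.erase (pauliZero n)).card : ℝ) = 4 ^ n - 1 := by
    rw [Finset.card_erase_of_mem (Finset.mem_univ _), Nat.cast_sub (Finset.card_pos.mpr ⟨pauliZero n, Finset.mem_univ _⟩)]
    simp [← mul_pow]
  have h4 : (1 : ℝ) < 4 ^ n := one_lt_pow₀ (by norm_num) (by omega)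
  have hne : (Finset.univ.erase (pauliZero n)).Nonempty := by
    rw [← Finset.card_pos]
    have : (0 : ℝ) < (Finset.univ.erase (pauliZero n)).card := by rw [hcard]; linarith
    exact_mod_cast this
  apply Finset.exists_le_of_sum_le hne
  rw [Finset.sum_const, nsmul_eq_mul, hcard, mul_div_cancel₀ _ (sub_ne_zero.mpr h4.ne')]
  exact hsumF
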